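/- arXiv:1712.00495 — 3 statements merged into one kernel-verified Lean document; each statement's English description precedes it below -/
import Mathlib

section
/- Let D be a digraph with diachromatic number k. Then D is k-minimal (i.e., dac(D − f) < k for every arc f of D) if and only if D has exactly k(k−1) arcs. -/
/-- The subset `S` of vertices induces an acyclic subdigraph of the digraph with
arc relation `A` (i.e. there is no directed cycle all of whose vertices lie in `S`). -/
def AcyclicSet {V : Type*} (A : V → V → Prop) (S : Set V) : Prop :=
  ∀ v : V, ¬ Relation.TransGen (fun x y => x ∈ S ∧ y ∈ S ∧ A x y) v v

/-- `c` is an acyclic vertex coloring of the digraph `A` with `k` colors: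
`c` is surjective and every chromatic class induces an acyclic subdigraph. -/
def IsAcyclicColoring {V : Type*} (A : V → V → Prop) {k : ℕ} (c : V → Fin k) : Prop :=
  Function.Surjective c ∧ ∀ i : Fin k, AcyclicSet A {v | c v = i}

/-- `c` is a complete vertex coloring of the digraph `A` with `k` colors:
`c` is surjective and for every ordered pair of distinct colors `(i, j)` there is
an arc `(u, v)` with `c u = i` and `c v = j`. -/
def IsCompleteColoring {V : Type*} (A : V → V → Prop) {k : ℕ} (c : V → Fin k) : Prop :=
  Function.Surjective c ∧
    ∀ i j : Fin k, i ≠ j → ∃ u v : V, A u v ∧ c u = i ∧ c v = j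

/-- The diachromatic number: the largest `k` admitting a complete acyclic `k`-coloring. -/
noncomputable def dac {V : Type*} (A : V → V → Prop) : ℕ :=
  sSup {k | ∃ c : V → Fin k, IsAcyclicColoring A c ∧ IsCompleteColoring A c}

/-- The dichromatic number: the smallest `k` admitting an acyclic `k`-coloring. -/
noncomputable def dc {V : Type*} (A : V → V → Prop) : ℕ :=
  sInf {k | ∃ c : V → Fin k, IsAcyclicColoring A c}

/-- The pseudoachromatic number: the largest `k` admitting a complete `k`-coloring. -/
noncomputable def psi {V : Type*} (A : V → V → Prop) : ℕ :=
  sSup {k | ∃ c : V → Fin k, IsCompleteColoring A c}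

/-- `A` is a tournament: no loops, and for distinct vertices exactly one of the
two possible arcs is present. -/
def IsTournament {V : Type*} (A : V → V → Prop) : Prop :=
  (∀ v : V, ¬ A v v) ∧ ∀ u v : V, u ≠ v → (A u v ↔ ¬ A v u)

theorem dac_bdd {V : Type*} [Fintype V] (A : V → V → Prop) :
    BddAbove {k | ∃ c : V → Fin k, IsAcyclicColoring A c ∧ IsCompleteColoring A c} := by
  refine ⟨Fintype.card V, ?_⟩
  rintro k ⟨c, hc, -⟩
  simpa using Fintype.card_le_of_surjective c hc.1

theorem dac_mem {V : Type*} [Fintype V] (A : V → V → Prop) (h : 0 < dac A) :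
    ∃ c : V → Fin (dac A), IsAcyclicColoring A c ∧ IsCompleteColoring A c := by
  have hne : {k | ∃ c : V → Fin k, IsAcyclicColoring A c ∧ IsCompleteColoring A c}.Nonempty := by
    by_contra hn
    rw [Set.not_nonempty_iff_eq_empty] at hn
    unfold dac at h
    rw [hn] at h
    simp at h
  exact Nat.sSup_mem hne (dac_bdd A)

theorem card_pairs (k : ℕ) :
    Nat.card {p : Fin k × Fin k // p.1 ≠ p.2} = k * (k - 1) := by
  rw [Nat.card_eq_fintype_card, Fintype.card_subtype]
  have : (Finset.univ.filter fun p : Fin k × Fin k => p.1 ≠ p.2)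
      = (Finset.univ : Finset (Fin k)).offDiag := by
    ext p; simp [Finset.mem_offDiag]
  rw [this, Finset.offDiag_card]
  simp [Nat.mul_sub]

theorem exists_inj {V : Type*} (A : V → V → Prop) {k : ℕ} (c : V → Fin k)
    (hc : IsCompleteColoring A c) :
    ∃ g : {p : Fin k × Fin k // p.1 ≠ p.2} → {p : V × V // A p.1 p.2},
      Function.Injective g ∧ ∀ p, c (g p).1.1 = p.1.1 ∧ c (g p).1.2 = p.1.2 := by
  have h : ∀ p : {p : Fin k × Fin k // p.1 ≠ p.2}, ∃ q : {p : V × V // A p.1 p.2},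
      c q.1.1 = p.1.1 ∧ c q.1.2 = p.1.2 := by
    rintro ⟨⟨i, j⟩, hij⟩
    obtain ⟨u, v, ha, hu, hv⟩ := hc.2 i j hij
    exact ⟨⟨(u, v), ha⟩, hu, hv⟩
  choose g hg using h
  refine ⟨g, ?_, hg⟩
  intro p q hpq
  apply Subtype.ext
  apply Prod.ext
  · rw [← (hg p).1, ← (hg q).1, hpq]
  · rw [← (hg p).2, ← (hg q).2, hpq]

/-- A digraph `D` with diachromatic number `k` is `k`-minimal (deleting any arc
decreases the diachromatic number below `k`) if and only if its size is `k(k-1)`. -/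
theorem stmt7 {V : Type*} [Fintype V] (A : V → V → Prop)
    (hirr : ∀ v : V, ¬ A v v) (k : ℕ) (hk : dac A = k) :
    (∀ u v : V, A u v →
        dac (fun x y : V => A x y ∧ ¬(x = u ∧ y = v)) < k) ↔
      Nat.card {p : V × V // A p.1 p.2} = k * (k - 1) := by
  classical
  constructor
  · intro h
    rcases Nat.eq_zero_or_pos k with h0 | hpos
    · have : IsEmpty {p : V × V // A p.1 p.2} :=
        ⟨fun p => by have := h _ _ p.2; omega⟩
      simp [h0]
    · subst hk
      obtain ⟨c, hac, hcc⟩ := dac_mem A hpos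
      obtain ⟨g, hinj, hg⟩ := exists_inj A c hcc
      rw [← card_pairs]
      refine (Nat.card_eq_of_bijective g ⟨hinj, ?_⟩).symm
      rintro ⟨⟨u, v⟩, ha⟩
      by_contra hn
      have hlt := h u v ha
      refine absurd hlt (not_lt.mpr (le_csSup (dac_bdd _) ⟨c, ⟨hac.1, ?_⟩, hcc.1, ?_⟩))
      · intro i w hw
        refine hac.2 i w (Relation.TransGen.mono (fun x y hxy => ?_) w w hw)
        exact ⟨hxy.1, hxy.2.1, hxy.2.2.1⟩
      · intro i j hij
        refine ⟨(g ⟨(i, j), hij⟩).1.1, (g ⟨(i, j), hij⟩).1.2,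
          ⟨(g ⟨(i, j), hij⟩).2, ?_⟩, (hg ⟨(i, j), hij⟩).1, (hg ⟨(i, j), hij⟩).2⟩
        rintro ⟨h1, h2⟩
        exact hn ⟨⟨(i, j), hij⟩, Subtype.ext (Prod.ext h1 h2)⟩
  · intro hcard u v ha
    by_contra hle
    rw [not_lt] at hle
    have hkpos : 0 < k := by
      rcases Nat.eq_zero_or_pos k with h0 | hpos
      · have : Nonempty {p : V × V // A p.1 p.2} := ⟨⟨(u, v), ha⟩⟩
        have := Nat.card_pos (α := {p : V × V // A p.1 p.2})
        simp only [h0] at hcard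
        omega
      · exact hpos
    obtain ⟨c, -, hcc⟩ := dac_mem _ (lt_of_lt_of_le hkpos hle)
    obtain ⟨g, hinj, -⟩ := exists_inj _ c hcc
    have h1 := Nat.card_le_card_of_injective g hinj
    rw [card_pairs] at h1
    have h2 : Nat.card {p : V × V // A p.1 p.2 ∧ ¬(p.1 = u ∧ p.2 = v)}
        < Nat.card {p : V × V // A p.1 p.2} := by
      rw [Nat.card_eq_fintype_card, Nat.card_eq_fintype_card]
      refine Fintype.card_lt_of_injective_of_notMem
        (fun p => (⟨p.1, p.2.1⟩ : {p : V × V // A p.1 p.2})) ?_ (b := ⟨(u, v), ha⟩) ?_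
      · intro p q hpq
        have h := congrArg (fun x : {p : V × V // A p.1 p.2} => x.1) hpq
        exact Subtype.ext h
      · rintro ⟨⟨p, hp⟩, hpe⟩
        have := congrArg Subtype.val hpe
        simp only at this
        subst this
        exact hp.2 ⟨rfl, rfl⟩
    have h3 := Nat.mul_le_mul hle (Nat.sub_le_sub_right hle 1)
    exact absurd (h3.trans h1) (by rw [← hcard]; exact not_le.mpr h2)
end

section
/- Every tournament T of order n ≥ 3 has a discordant transitive subtournament of order at most 2·log₂((2n+2)/3); that is, Ξ₂(T) ≤ 2·log₂((2n+2)/3). -/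
def TrSet {V : Type*} (A : V → V → Prop) (S : Finset V) : Prop :=
  ∀ x ∈ S, ∀ y ∈ S, ∀ z ∈ S, A x y → A y z → A x z

theorem TrSet.acyclic {V : Type*} {A : V → V → Prop} (hT : IsTournament A) {S : Finset V}
    (h : TrSet A S) : AcyclicSet A (S : Set V) := by
  intro v hv
  have key : ∀ a b, Relation.TransGen
      (fun x y => x ∈ (S : Set V) ∧ y ∈ (S : Set V) ∧ A x y) a b → a ∈ S ∧ b ∈ S ∧ A a b := by
    intro a b hab
    induction hab with
    | single h1 => exact ⟨h1.1, h1.2.1, h1.2.2⟩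
    | tail _ h2 ih =>
      obtain ⟨h3, h4, h5⟩ := h2
      exact ⟨ih.1, h4, h _ ih.1 _ h3 _ h4 ih.2.2 h5⟩
  exact hT.1 v (key v v hv).2.2

theorem IsTournament.flip {V : Type*} {A : V → V → Prop} (hT : IsTournament A) :
    IsTournament (fun x y => A y x) :=
  ⟨hT.1, fun u v h => hT.2 v u h.symm⟩

open Classical in
theorem exists_small_in {V : Type*} {A : V → V → Prop} (hT : IsTournament A)
    (X : Finset V) (hX : X.Nonempty) : ∃ x ∈ X, 2 * (X.filter (fun y => A y x)).card + 1 ≤ X.card := by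
  by_contra! hcon
  have h1 : ∑ x ∈ X, X.card < ∑ x ∈ X, (2 * (X.filter (fun y => A y x)).card + 1) :=
    Finset.sum_lt_sum_of_nonempty hX hcon
  have h2 : ∑ x ∈ X, (X.filter (fun y => A y x)).card = ∑ x ∈ X, (X.filter (fun y => A x y)).card := by
    simp only [Finset.card_filter]
    rw [Finset.sum_comm]
  have h3 : ∀ x ∈ X, (X.filter (fun y => A y x)).card + (X.filter (fun y => A x y)).card + 1
      = X.card := by
    intro x hx
    rw [← Finset.card_union_of_disjoint, ← Finset.card_erase_add_one hx]
    · congr 2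
      ext y
      simp only [Finset.mem_union, Finset.mem_filter, Finset.mem_erase]
      have := hT.1 x
      have := hT.2 x y
      grind
    · rw [Finset.disjoint_left]
      intro y
      simp only [Finset.mem_filter]
      have := hT.1 x
      have := hT.2 x y
      grind
  have h4 := Finset.sum_congr rfl h3
  simp only [Finset.sum_add_distrib, ← Finset.mul_sum] at h1 h4
  omega

open Classical in
theorem extend_top {V : Type*} [Fintype V] {A : V → V → Prop} (hT : IsTournament A) :
    ∀ (m : ℕ) (S : Finset V), TrSet A S →
      (Finset.univ.filter (fun x => ∀ s ∈ S, A x s)).card = m →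
      ∃ (S' : Finset V) (k : ℕ), S ⊆ S' ∧ TrSet A S' ∧ S'.card ≤ S.card + k ∧ 2 ^ k ≤ m + 1 ∧
        ∀ x, ¬ ∀ s ∈ S', A x s := by
  intro m
  induction m using Nat.strong_induction_on with
  | _ m ih =>
    intro S hS hm
    set X := Finset.univ.filter (fun x => ∀ s ∈ S, A x s) with hXdef
    rcases X.eq_empty_or_nonempty with h0 | hne
    · refine ⟨S, 0, subset_rfl, hS, le_rfl, by simp, fun x hx => ?_⟩
      have : x ∈ X := by simp [hXdef]; exact hx
      simp [h0] at this
    · obtain ⟨x, hx, hc⟩ := exists_small_in hT X hne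
      have hxs : ∀ s ∈ S, A x s := by simpa [hXdef] using hx
      have hS1 : TrSet A (insert x S) := by
        intro a ha b hb c hcc hab hbc
        rw [Finset.mem_insert] at ha hb hcc
        have h1 := hT.1
        have h2 := hT.2
        rcases hb with rfl | hb
        · rcases ha with rfl | ha
          · exact hbc
          · have := hxs a ha
            grind
        · rcases hcc with rfl | hcc
          · have := hxs b hb
            grind
          · rcases ha with rfl | ha
            · exact hxs c hcc
            · exact hS a ha b hb c hcc hab hbc
      have heq : Finset.univ.filter (fun y => ∀ s ∈ insert x S, A y s) =
          X.filter (fun y => A y x) := by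
        ext y
        simp [hXdef, and_comm]
      obtain ⟨S', k, h1, h2, h3, h4, h5⟩ :=
        ih (X.filter (fun y => A y x)).card (by omega) (insert x S) hS1 (by rw [heq])
      refine ⟨S', k + 1, (Finset.subset_insert x S).trans h1, h2, ?_, ?_, h5⟩
      · have := Finset.card_insert_le x S
        omega
      · rw [pow_succ]; omega

open Classical in
theorem exists_pair {V : Type*} [Fintype V] {A : V → V → Prop} (hT : IsTournament A)
    (hn : 3 ≤ Fintype.card V) : ∃ u v : V, u ≠ v ∧
      3 * ((Finset.univ.filter (fun w => A w u ∧ A w v)).card +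
        (Finset.univ.filter (fun w => A u w ∧ A v w)).card) + 4 ≤ 2 * Fintype.card V := by
  by_contra! hcon
  let f : V → V → V → ℤ := fun u v w =>
    if u ≠ v ∧ v ≠ w ∧ w ≠ u then
      3 * ((if A w u ∧ A w v then 1 else 0) + (if A u w ∧ A v w then 1 else 0)) - 2
    else 0
  have hcyc : ∀ u v w, f u v w + f v w u + f w u v ≤ 0 := by
    intro u v w
    simp only [f]
    by_cases h : u ≠ v ∧ v ≠ w ∧ w ≠ u
    · obtain ⟨h1, h2, h3⟩ := h
      have a1 := hT.2 u v h1
      have a2 := hT.2 v w h2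
      have a3 := hT.2 w u h3
      by_cases b1 : A v u <;> by_cases b2 : A w v <;> by_cases b3 : A u w <;>
        simp [h1, h2, h3, a1, a2, a3, b1, b2, b3]
    · rw [if_neg h, if_neg (by tauto), if_neg (by tauto)]; simp
  have hpos : ∀ u v, u ≠ v → 0 < ∑ w, f u v w := by
    intro u v huv
    have h1 := hcon u v huv
    have h2 : ∀ w, f u v w = 3 * ((if A w u ∧ A w v then 1 else 0) + (if A u w ∧ A v w then 1 else 0))
        - 2 + 2 * ((if w = u then 1 else 0) + (if w = v then 1 else 0)) := by
      intro w
      have := hT.1 u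
      have := hT.1 v
      simp only [f]
      by_cases b1 : w = u
      · subst b1; simp_all
      · by_cases b2 : w = v
        · subst b2; simp_all
        · simp [b1, b2, huv, Ne.symm b2]
    rw [Finset.sum_congr rfl (fun w _ => h2 w)]
    simp only [Finset.sum_add_distrib, Finset.sum_sub_distrib, ← Finset.mul_sum]
    simp only [Finset.sum_boole, Finset.sum_const, Finset.card_univ, nsmul_eq_mul]
    have hone : ∀ z : V, (Finset.univ.filter (fun x => x = z)).card = 1 := fun z =>
      Finset.card_eq_one.2 ⟨z, by ext y; simp⟩
    have o1 := hone u
    have o2 := hone v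
    push_cast
    omega
  have hnn : ∀ u v, 0 ≤ ∑ w, f u v w := by
    intro u v
    by_cases h : u = v
    · simp [f, h]
    · exact (hpos u v h).le
  obtain ⟨u, v, huv⟩ := Fintype.exists_pair_of_one_lt_card (α := V) (by omega)
  have htot : 0 < ∑ u, ∑ v, ∑ w, f u v w := by
    refine Finset.sum_pos' (fun u _ => Finset.sum_nonneg (fun v _ => hnn u v)) ⟨u, by simp, ?_⟩
    exact Finset.sum_pos' (fun v _ => hnn u v) ⟨v, by simp, hpos u v huv⟩
  have hle : ∑ u, ∑ v, ∑ w, (f u v w + f v w u + f w u v) ≤ 0 :=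
    Finset.sum_nonpos fun u _ => Finset.sum_nonpos fun v _ => Finset.sum_nonpos fun w _ => hcyc u v w
  simp only [Finset.sum_add_distrib] at hle
  have e1 : ∑ u, ∑ v, ∑ w, f v w u = ∑ u, ∑ v, ∑ w, f u v w := by
    rw [Finset.sum_comm]
    exact Finset.sum_congr rfl fun v _ => Finset.sum_comm
  have e2 : ∑ u, ∑ v, ∑ w, f w u v = ∑ u, ∑ v, ∑ w, f u v w := by
    exact (Finset.sum_congr rfl fun u _ => Finset.sum_comm).trans Finset.sum_comm
  omega

/-- Every tournament `T` of order `n ≥ 3` has a discordant transitive subtournament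
of order at most `2·log₂((2n+2)/3)`; that is, `Ξ₂(T) ≤ 2·log₂((2n+2)/3)`. -/
theorem stmt8 {V : Type*} [Fintype V] (A : V → V → Prop)
    (hT : IsTournament A) (hn : 3 ≤ Fintype.card V) :
    ∃ S : Finset V, AcyclicSet A (S : Set V) ∧
      (∀ x : V, x ∉ S → ∃ z ∈ S, ∃ w ∈ S, A x z ∧ A w x) ∧
      (S.card : ℝ) ≤ 2 * Real.logb 2 ((2 * (Fintype.card V : ℝ) + 2) / 3) := by
  classical
  obtain ⟨u, v, huv, hc⟩ := exists_pair hT hn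
  set a := (Finset.univ.filter (fun w => A w u ∧ A w v)).card with ha
  set b := (Finset.univ.filter (fun w => A u w ∧ A v w)).card with hb
  have h0 : TrSet A {u, v} := by
    have h1 := hT.1
    have h2 := hT.2 u v huv
    intro x hx y hy z hz hxy hyz
    simp only [Finset.mem_insert, Finset.mem_singleton] at hx hy hz
    grind
  obtain ⟨S, k, hs1, hs2, hs3, hs4, hs5⟩ := extend_top hT a {u, v} h0 (by rw [ha]; simp)
  have h0' : TrSet (fun x y => A y x) S := fun x hx y hy z hz h1 h2 => hs2 z hz y hy x hx h2 h1
  obtain ⟨S', l, ht1, ht2, ht3, ht4, ht5⟩ := extend_top hT.flip _ S h0' rfl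
  have hY : (Finset.univ.filter (fun x => ∀ s ∈ S, A s x)).card ≤ b := by
    rw [hb]
    refine Finset.card_le_card fun x hx => ?_
    simp only [Finset.mem_filter, Finset.mem_univ, true_and] at hx ⊢
    exact ⟨hx u (hs1 (by simp)), hx v (hs1 (by simp))⟩
  have hl : 2 ^ l ≤ b + 1 := by omega
  have htr : TrSet A S' := fun x hx y hy z hz h1 h2 => ht2 z hz y hy x hx h2 h1
  have hcard : S'.card ≤ 2 + k + l := by
    have := Finset.card_pair huv
    omega
  refine ⟨S', htr.acyclic hT, ?_, ?_⟩
  · intro x hx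
    have h1 := ht5 x
    have h2 := hs5 x
    push Not at h1 h2
    obtain ⟨z, hz, hz'⟩ := h1
    obtain ⟨w, hw, hw'⟩ := h2
    have hw2 := ht1 hw
    refine ⟨z, hz, w, hw2, ?_, ?_⟩
    · exact (hT.2 x z (by rintro rfl; exact hx hz)).2 hz'
    · exact (hT.2 w x (by rintro rfl; exact hx hw2)).2 hw'
  · set n := Fintype.card V
    have hcR : (3 : ℝ) * (a + b) + 4 ≤ 2 * n := by exact_mod_cast hc
    have hk : (2 : ℝ) ^ k ≤ a + 1 := by exact_mod_cast hs4
    have hl' : (2 : ℝ) ^ l ≤ b + 1 := by exact_mod_cast hl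
    have hn0 : (0 : ℝ) < (2 * (n : ℝ) + 2) / 3 := by positivity
    have hpow : (2 : ℝ) ^ (2 + k + l) ≤ ((2 * (n : ℝ) + 2) / 3) ^ 2 := by
      have h1 : (2 : ℝ) ^ k * 2 ^ l ≤ (a + 1) * (b + 1) := by gcongr
      have h2 : ((a : ℝ) + b + 2) ^ 2 ≤ ((2 * (n : ℝ) + 2) / 3) ^ 2 := by
        gcongr
        linarith
      have h3 : (2 : ℝ) ^ (2 + k + l) = 4 * (2 ^ k * 2 ^ l) := by
        rw [pow_add, pow_add]; ring
      rw [h3]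
      nlinarith [sq_nonneg ((a : ℝ) - b)]
    have hlog : ((2 + k + l : ℕ) : ℝ) ≤ Real.logb 2 (((2 * (n : ℝ) + 2) / 3) ^ 2) := by
      rw [Real.le_logb_iff_rpow_le (by norm_num) (by positivity), Real.rpow_natCast]
      exact hpow
    rw [Real.logb_pow] at hlog
    have : (S'.card : ℝ) ≤ ((2 + k + l : ℕ) : ℝ) := by exact_mod_cast hcard
    push_cast at hlog this ⊢
    linarith
end

section
/- If T is a transitive tournament of order n, then dac(T) = ψ(T) = ⌈n/2⌉. -/
lemma aux_upper {V : Type*} [Fintype V] (A : V → V → Prop)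
    (hT : IsTournament A) {k : ℕ} (c : V → Fin k) (hc : IsCompleteColoring A c) :
    k ≤ (Fintype.card V + 1) / 2 := by
  classical
  obtain ⟨hs, hc⟩ := hc
  let f : Fin k → ℕ := fun i => (Finset.univ.filter (fun v => c v = i)).card
  have hsum : Fintype.card V = ∑ i, f i := by
    have := Finset.card_eq_sum_card_fiberwise (f := c) (s := Finset.univ) (t := Finset.univ)
      (fun x _ => by simp)
    simpa using this
  have hpos : ∀ i, 1 ≤ f i := by
    intro i
    obtain ⟨v, hv⟩ := hs i
    exact Finset.card_pos.mpr ⟨v, by simp [hv]⟩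
  have hS : (Finset.univ.filter (fun i => f i = 1)).card ≤ 1 := by
    rw [Finset.card_le_one]
    intro i hi j hj
    by_contra hij
    simp only [Finset.mem_filter, Finset.mem_univ, true_and] at hi hj
    obtain ⟨a, ha⟩ := Finset.card_eq_one.mp hi
    obtain ⟨b, hb⟩ := Finset.card_eq_one.mp hj
    have ha' : ∀ v, c v = i → v = a := fun v hv => by
      have : v ∈ Finset.univ.filter (fun v => c v = i) := by simp [hv]
      rw [ha] at this
      simpa using this
    have hb' : ∀ v, c v = j → v = b := fun v hv => by
      have : v ∈ Finset.univ.filter (fun v => c v = j) := by simp [hv]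
      rw [hb] at this
      simpa using this
    obtain ⟨u, v, huv, hu, hv⟩ := hc i j hij
    obtain ⟨u', v', huv', hu', hv'⟩ := hc j i (Ne.symm hij)
    have e1 := ha' u hu
    have e2 := hb' v hv
    have e3 := hb' u' hu'
    have e4 := ha' v' hv'
    subst e1 e2 e3 e4
    have hne : v' ≠ u' := by
      intro h
      rw [h] at hv'
      exact hij (hv'.symm.trans hu')
    exact (hT.2 _ _ hne).mp huv huv'
  have h2 : ∑ i : Fin k, 2 ≤ ∑ i, (f i + if f i = 1 then 1 else 0) := by
    apply Finset.sum_le_sum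
    intro i _
    have := hpos i
    split_ifs <;> omega
  rw [Finset.sum_add_distrib, ← hsum, ← Finset.card_filter] at h2
  simp only [Finset.sum_const, Finset.card_univ, Fintype.card_fin, smul_eq_mul] at h2
  omega

lemma aux_pos {V : Type*} [Fintype V] (A : V → V → Prop)
    (hT : IsTournament A)
    (htrans : ∀ v : V, ¬ Relation.TransGen A v v) :
    ∃ p : V → Fin (Fintype.card V), Function.Bijective p ∧ ∀ u v, p u < p v → A u v := by
  classical
  have tr : ∀ u v w, A u v → A v w → A u w := by
    intro u v w h1 h2
    by_cases h : u = w
    · subst h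
      exact (htrans u ((Relation.TransGen.single h1).tail h2)).elim
    · rw [hT.2 u w h]
      intro h3
      exact htrans u (((Relation.TransGen.single h1).tail h2).tail h3)
  let q : V → ℕ := fun v => (Finset.univ.filter (fun u => A u v)).card
  have hq : ∀ v, q v < Fintype.card V := by
    intro v
    apply Finset.card_lt_univ_of_notMem (x := v)
    simp [hT.1 v]
  have mono : ∀ u v, A u v → q u < q v := by
    intro u v h
    apply Finset.card_lt_card
    rw [Finset.ssubset_iff_of_subset]
    · exact ⟨u, by simp [h], by simp [hT.1 u]⟩
    · intro x hx
      simp only [Finset.mem_filter, Finset.mem_univ, true_and] at hx ⊢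
      exact tr _ _ _ hx h
  have tot : ∀ u v, u ≠ v → A u v ∨ A v u := by
    intro u v h
    have := hT.2 u v h
    tauto
  refine ⟨fun v => ⟨q v, hq v⟩, ?_, ?_⟩
  · rw [Fintype.bijective_iff_injective_and_card]
    refine ⟨?_, by simp⟩
    intro u v h
    have h' : q u = q v := by simpa using h
    by_contra hne
    rcases tot u v hne with h1 | h1 <;> have := mono _ _ h1 <;> omega
  · intro u v h
    have h' : q u < q v := h
    have hne : u ≠ v := by
      rintro rfl
      omega
    rcases tot u v hne with h1 | h1
    · exact h1
    · have := mono _ _ h1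
      omega

lemma aux_lower {V : Type*} [Fintype V] (A : V → V → Prop)
    (hT : IsTournament A)
    (htrans : ∀ v : V, ¬ Relation.TransGen A v v) :
    ∃ c : V → Fin ((Fintype.card V + 1) / 2), IsAcyclicColoring A c ∧ IsCompleteColoring A c := by
  obtain ⟨p, hp, hA⟩ := aux_pos A hT htrans
  let n := Fintype.card V
  let c : V → Fin ((Fintype.card V + 1) / 2) := fun v =>
    ⟨min (p v).1 (Fintype.card V - 1 - (p v).1), by have := (p v).2; omega⟩
  have lo : ∀ i : Fin ((Fintype.card V + 1) / 2), ∃ v, (p v).1 = i.1 ∧ c v = i := by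
    intro i
    have hi := i.2
    obtain ⟨v, hv⟩ := hp.2 ⟨i.1, by omega⟩
    have hv' : (p v).1 = i.1 := by rw [hv]
    refine ⟨v, hv', ?_⟩
    apply Fin.ext
    simp only [c]
    omega
  have hi : ∀ i : Fin ((Fintype.card V + 1) / 2),
      ∃ v, (p v).1 = Fintype.card V - 1 - i.1 ∧ c v = i := by
    intro i
    have hi := i.2
    obtain ⟨v, hv⟩ := hp.2 ⟨Fintype.card V - 1 - i.1, by omega⟩
    have hv' : (p v).1 = Fintype.card V - 1 - i.1 := by rw [hv]
    refine ⟨v, hv', ?_⟩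
    apply Fin.ext
    simp only [c]
    omega
  have hs : Function.Surjective c := fun i => by
    obtain ⟨v, _, hv⟩ := lo i
    exact ⟨v, hv⟩
  refine ⟨c, ⟨hs, ?_⟩, hs, ?_⟩
  · intro i v h
    exact htrans v (Relation.TransGen.mono (fun _ _ h => h.2.2) _ _ h)
  · intro i j hij
    have hi2 := i.2
    have hj2 := j.2
    have hne : i.1 ≠ j.1 := fun h => hij (Fin.ext h)
    rcases lt_or_gt_of_ne hne with h | h
    · obtain ⟨u, hu, hu'⟩ := lo i
      obtain ⟨v, hv, hv'⟩ := lo j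
      exact ⟨u, v, hA _ _ (by rw [Fin.lt_def]; omega), hu', hv'⟩
    · obtain ⟨u, hu, hu'⟩ := lo i
      obtain ⟨v, hv, hv'⟩ := hi j
      exact ⟨u, v, hA _ _ (by rw [Fin.lt_def]; omega), hu', hv'⟩

/-- If `T` is a transitive tournament of order `n`, then `dac(T) = ψ(T) = ⌈n/2⌉`. -/
theorem stmt10 {V : Type*} [Fintype V] (A : V → V → Prop)
    (hT : IsTournament A)
    (htrans : ∀ v : V, ¬ Relation.TransGen A v v) :
    dac A = (Fintype.card V + 1) / 2 ∧ psi A = (Fintype.card V + 1) / 2 := by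
  obtain ⟨c, h1, h2⟩ := aux_lower A hT htrans
  constructor
  · refine IsGreatest.csSup_eq ⟨⟨c, h1, h2⟩, ?_⟩
    rintro k ⟨c, _, hc⟩
    exact aux_upper A hT c hc
  · refine IsGreatest.csSup_eq ⟨⟨c, h2⟩, ?_⟩
    rintro k ⟨c, hc⟩
    exact aux_upper A hT c hc
end
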